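/- For each n ≥ 1 let 𝒫_n ⊆ C(AddCircle (2π), ℂ) be the complex vector space of trigonometric polynomials of degree at most n−1, i.e. functions of the form a(x) = Σ_{k=−n+1}^{n−1} a_k e^{ikx}, and let S(𝒫_n) be the set of linear functionals φ : 𝒫_n → ℂ with φ(1) = 1 and φ(a) ≥ 0 for every a ∈ 𝒫_n that is nonnegative as a function on the circle, equipped with the distance d_n(φ, ψ) = sup { |φ(a) − ψ(a)| : a ∈ 𝒫_n, sup_x |a′(x)| ≤ 1 }. Let P(S¹) be the set of Borel probability measures on AddCircle (2π), equipped with the Kantorovich distance d(μ, ν) = sup { |∫ f dμ − ∫ f dν| : f 1-Lipschitz for the arc-length metric }. Then each (S(𝒫_n), d_n) is a nonempty compact metric space, and (S(𝒫_n), d_n) converges to (P(S¹), d) in Gromov–Hausdorff distance as n → ∞. -/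

import Mathlib

open MeasureTheory Filter
open scoped ComplexOrder

instance : Fact (0 < 2 * Real.pi) := ⟨by positivity⟩

/-- The Fejér–Riesz operator system `𝒫_n`: trigonometric polynomials of degree at most `n − 1`
on the circle, i.e. the span of the Fourier modes `e^{ikx}` with `|k| ≤ n − 1`. -/
noncomputable def fejerRieszSubmodule (n : ℕ) :
    Submodule ℂ C(AddCircle (2 * Real.pi), ℂ) :=
  Submodule.span ℂ {g : C(AddCircle (2 * Real.pi), ℂ) |
    ∃ k : ℤ, |k| ≤ (n : ℤ) - 1 ∧ g = fourier k}

lemma one_mem_fejerRieszSubmodule (n : ℕ) :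
    (1 : C(AddCircle (2 * Real.pi), ℂ)) ∈ fejerRieszSubmodule (n + 1) := by
  apply Submodule.subset_span
  refine ⟨0, by simp, ?_⟩
  ext x
  simp

/-- The constant function `1`, as an element of the Fejér–Riesz operator system `𝒫_{n+1}`. -/
noncomputable def fejerRieszOne (n : ℕ) : fejerRieszSubmodule (n + 1) :=
  ⟨1, one_mem_fejerRieszSubmodule n⟩

/-- A state on `𝒫_{n+1}`: a linear functional `φ` with `φ(1) = 1` which is nonnegative on
elements that are nonnegative as functions on the circle. -/
noncomputable def FejerRieszState (n : ℕ) : Type :=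
  {φ : fejerRieszSubmodule (n + 1) →ₗ[ℂ] ℂ //
    φ (fejerRieszOne n) = 1 ∧
    ∀ a : fejerRieszSubmodule (n + 1),
      (∀ x : AddCircle (2 * Real.pi), 0 ≤ (a : C(AddCircle (2 * Real.pi), ℂ)) x) →
      0 ≤ φ a}

/-- The Lipschitz seminorm `sup_x |a′(x)|` of a trigonometric polynomial. -/
noncomputable def trigLipSeminorm {n : ℕ} (a : fejerRieszSubmodule n) : ℝ :=
  ⨆ x : ℝ, ‖deriv
    (fun y : ℝ => (a : C(AddCircle (2 * Real.pi), ℂ)) ((y : ℝ) : AddCircle (2 * Real.pi))) x‖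

/-- Connes' distance on the state space of `𝒫_{n+1}`:
`d_n(φ, ψ) = sup { |φ(a) − ψ(a)| : a ∈ 𝒫_{n+1}, sup_x |a′(x)| ≤ 1 }`. -/
noncomputable def fejerRieszStateDist (n : ℕ) (φ ψ : FejerRieszState n) : ℝ :=
  sSup {r : ℝ | ∃ a : fejerRieszSubmodule (n + 1),
    trigLipSeminorm a ≤ 1 ∧ r = ‖φ.1 a - ψ.1 a‖}

/-- The Kantorovich distance on Borel probability measures on the circle:
`d(μ, ν) = sup { |∫ f dμ − ∫ f dν| : f 1-Lipschitz }`. -/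
noncomputable def kantorovichDist
    (μ ν : ProbabilityMeasure (AddCircle (2 * Real.pi))) : ℝ :=
  sSup {r : ℝ | ∃ f : AddCircle (2 * Real.pi) → ℝ, LipschitzWith 1 f ∧
    r = |(∫ x, f x ∂(μ : Measure (AddCircle (2 * Real.pi))))
        - ∫ x, f x ∂(ν : Measure (AddCircle (2 * Real.pi)))|}


namespace FRGH
open Topology

/-- The circle. -/
local notation "Circ" => AddCircle (2 * Real.pi)

lemma norm_coe_le (x : ℝ) : ‖(x : Circ)‖ ≤ |x| := by
  have := QuotientAddGroup.norm_mk_le_norm (S := AddSubgroup.zmultiples (2 * Real.pi)) (m := x)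
  simpa using! this

lemma exists_rep (z : Circ) : ∃ w : ℝ, (w : Circ) = z ∧ |w| = ‖z‖ := by
  induction z using QuotientAddGroup.induction_on with
  | H x =>
    refine ⟨x - round ((2 * Real.pi)⁻¹ * x) * (2 * Real.pi), ?_, (AddCircle.norm_eq _).symm⟩
    have : ((round ((2 * Real.pi)⁻¹ * x) * (2 * Real.pi) : ℝ) : Circ) = 0 := by
      rw [AddCircle.coe_eq_zero_iff]
      exact ⟨round ((2 * Real.pi)⁻¹ * x), by simp⟩
    rw [AddCircle.coe_sub, this, sub_zero]

lemma norm_le_pi (z : Circ) : ‖z‖ ≤ Real.pi := by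
  have := AddCircle.norm_le_half_period (2 * Real.pi) (x := z) (by positivity)
  rw [abs_of_pos (by positivity)] at this
  linarith

lemma fourier_real (k : ℤ) (y : ℝ) :
    (fourier k : C(Circ, ℂ)) (y : Circ) = Complex.exp (Complex.I * k * y) := by
  rw [fourier_coe_apply]
  congr 1
  have : (Real.pi : ℂ) ≠ 0 := by exact_mod_cast Real.pi_ne_zero
  push_cast
  field_simp

lemma deriv_bdd {n : ℕ} {a : C(Circ, ℂ)} (ha : a ∈ fejerRieszSubmodule n) :
    Differentiable ℝ (fun y : ℝ => a (y : Circ)) ∧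
    ∃ C : ℝ, ∀ x, ‖deriv (fun y : ℝ => a (y : Circ)) x‖ ≤ C := by
  induction ha using Submodule.span_induction with
  | mem g hg =>
    obtain ⟨k, -, rfl⟩ := hg
    have h : ∀ x : ℝ, HasDerivAt (fun y : ℝ => (fourier k : C(Circ, ℂ)) (y : Circ))
        (Complex.exp (Complex.I * k * x) * (Complex.I * k * 1)) x := by
      intro x
      simp_rw [fourier_real]
      exact (((hasDerivAt_id (x : ℂ)).const_mul (Complex.I * k)).cexp).comp_ofReal
    refine ⟨fun x => (h x).differentiableAt, |k|, fun x => ?_⟩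
    rw [(h x).deriv]
    have : Complex.I * k * x = ((k * x : ℝ) : ℂ) * Complex.I := by push_cast; ring
    rw [norm_mul, this, Complex.norm_exp_ofReal_mul_I]
    simp
  | zero => exact ⟨by simp, 0, by simp⟩
  | add f g _ _ hf hg =>
    obtain ⟨hf, C, hC⟩ := hf
    obtain ⟨hg, D, hD⟩ := hg
    refine ⟨hf.add hg, C + D, fun x => ?_⟩
    have : deriv (fun y : ℝ => (f + g) (y : Circ)) x = _ := deriv_add (hf x) (hg x)
    rw [this]
    exact (norm_add_le _ _).trans (add_le_add (hC x) (hD x))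
  | smul c f _ hf =>
    obtain ⟨hf, C, hC⟩ := hf
    refine ⟨hf.const_smul c, ‖c‖ * C, fun x => ?_⟩
    have : deriv (fun y : ℝ => (c • f) (y : Circ)) x = _ := deriv_const_smul c (hf x)
    rw [this, norm_smul]
    gcongr
    exact hC x

lemma lip_iff {n : ℕ} (a : fejerRieszSubmodule n) :
    trigLipSeminorm a ≤ 1 ↔ LipschitzWith 1 (a : C(Circ, ℂ)) := by
  obtain ⟨hd, C, hC⟩ := deriv_bdd a.2
  constructor
  · intro h
    have h1 : ∀ x : ℝ, ‖deriv (fun y : ℝ => (a : C(Circ, ℂ)) (y : Circ)) x‖ ≤ 1 := fun x =>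
      (le_ciSup (f := fun x : ℝ => ‖deriv (fun y : ℝ => (a : C(Circ, ℂ)) (y : Circ)) x‖)
        ⟨C, by rintro _ ⟨x, rfl⟩; exact hC x⟩ x).trans h
    have h2 : LipschitzWith 1 (fun y : ℝ => (a : C(Circ, ℂ)) (y : Circ)) :=
      lipschitzWith_of_nnnorm_deriv_le hd fun x => h1 x
    refine LipschitzWith.of_dist_le_mul fun x y => ?_
    obtain ⟨v, hv, -⟩ := exists_rep y
    obtain ⟨w, hw, hw'⟩ := exists_rep (x - y)
    have hx : ((v + w : ℝ) : Circ) = x := by rw [AddCircle.coe_add, hv, hw]; abel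
    have := h2.dist_le_mul (v + w) v
    simp only [hx, hv] at this
    rwa [dist_eq_norm x y, ← hw', ← show dist (v + w) v = |w| by simp]
  · intro h
    refine ciSup_le fun x => ?_
    have h2 : LipschitzWith 1 (fun y : ℝ => (a : C(Circ, ℂ)) (y : Circ)) := by
      refine LipschitzWith.of_dist_le_mul fun x y => (h.dist_le_mul _ _).trans ?_
      gcongr
      rw [dist_eq_norm, ← AddCircle.coe_sub, Real.dist_eq]
      exact norm_coe_le _
    simpa using norm_deriv_le_of_lipschitz h2 (x₀ := x)

/-- every trig polynomial is Lipschitz, after scaling -/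
lemma exists_scale {n : ℕ} (a : fejerRieszSubmodule n) :
    ∃ c : ℂ, c ≠ 0 ∧ LipschitzWith 1 ((c • a : fejerRieszSubmodule n) : C(Circ, ℂ)) := by
  obtain ⟨hd, C, hC⟩ := deriv_bdd a.2
  have hC0 : 0 ≤ C := (norm_nonneg _).trans (hC 0)
  refine ⟨((C + 1)⁻¹ : ℝ), ?_, ?_⟩
  · exact_mod_cast (by positivity : (C + 1)⁻¹ ≠ 0)
  · rw [← lip_iff]
    refine ciSup_le fun x => ?_
    have : deriv (fun y : ℝ => ((((C + 1)⁻¹ : ℝ) : ℂ) • (a : C(Circ, ℂ))) (y : Circ)) x = _ :=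
      deriv_const_smul (((C + 1)⁻¹ : ℝ) : ℂ) (hd x)
    rw [Submodule.coe_smul, this, norm_smul, Complex.norm_real, Real.norm_eq_abs,
      abs_of_pos (by positivity), inv_mul_le_iff₀ (by positivity)]
    have := hC x
    linarith

lemma integrable_cont {E : Type*} [NormedAddCommGroup E] [SecondCountableTopology E]
    (μ : Measure Circ) [IsFiniteMeasure μ] {f : Circ → E}
    (hf : Continuous f) : Integrable f μ :=
  hf.integrable_of_hasCompactSupport (HasCompactSupport.of_compactSpace f)

lemma abs_int_sub_le (μ : ProbabilityMeasure Circ) {E : Type*} [NormedAddCommGroup E]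
    [NormedSpace ℝ E] [CompleteSpace E] [SecondCountableTopology E] {f g : Circ → E}
    (hf : Continuous f) (hg : Continuous g) {C : ℝ} (h : ∀ x, ‖f x - g x‖ ≤ C) :
    ‖(∫ x, f x ∂(μ : Measure Circ)) - ∫ x, g x ∂(μ : Measure Circ)‖ ≤ C := by
  rw [← integral_sub (integrable_cont _ hf) (integrable_cont _ hg)]
  simpa using norm_integral_le_of_norm_le_const (μ := (μ : Measure Circ))
    (f := fun x => f x - g x) (Eventually.of_forall h)

lemma lip_int_bdd (μ ν : ProbabilityMeasure Circ) {E : Type*} [NormedAddCommGroup E]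
    [NormedSpace ℝ E] [CompleteSpace E] [SecondCountableTopology E] {f : Circ → E}
    (hf : LipschitzWith 1 f) :
    ‖(∫ x, f x ∂(μ : Measure Circ)) - ∫ x, f x ∂(ν : Measure Circ)‖ ≤ 2 * Real.pi := by
  have h : ∀ x, ‖f x - f 0‖ ≤ Real.pi := fun x => by
    rw [← dist_eq_norm]
    refine (hf.dist_le_mul _ _).trans ?_
    simpa using norm_le_pi x
  have h1 := abs_int_sub_le μ hf.continuous continuous_const h
  have h2 := abs_int_sub_le ν hf.continuous continuous_const h
  simp only [integral_const, probReal_univ, one_smul] at h1 h2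
  calc _ = ‖((∫ x, f x ∂(μ : Measure Circ)) - f 0) - ((∫ x, f x ∂(ν : Measure Circ)) - f 0)‖ := by
        congr 1; abel
    _ ≤ _ := (norm_sub_le _ _).trans (by linarith)

lemma kant_bdd (μ ν : ProbabilityMeasure Circ) :
    BddAbove {r : ℝ | ∃ f : Circ → ℝ, LipschitzWith 1 f ∧
    r = |(∫ x, f x ∂(μ : Measure Circ)) - ∫ x, f x ∂(ν : Measure Circ)|} := by
  refine ⟨2 * Real.pi, ?_⟩
  rintro r ⟨f, hf, rfl⟩
  exact lip_int_bdd μ ν hf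

lemma le_kant (μ ν : ProbabilityMeasure Circ) {f : Circ → ℝ} (hf : LipschitzWith 1 f) :
    |(∫ x, f x ∂(μ : Measure Circ)) - ∫ x, f x ∂(ν : Measure Circ)| ≤ kantorovichDist μ ν :=
  le_csSup (kant_bdd μ ν) ⟨f, hf, rfl⟩

lemma kant_le (μ ν : ProbabilityMeasure Circ) {C : ℝ} (h : ∀ f : Circ → ℝ, LipschitzWith 1 f →
    |(∫ x, f x ∂(μ : Measure Circ)) - ∫ x, f x ∂(ν : Measure Circ)| ≤ C) :
    kantorovichDist μ ν ≤ C := by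
  refine csSup_le ⟨_, fun _ => 0, LipschitzWith.const' 0, rfl⟩ ?_
  rintro r ⟨f, hf, rfl⟩
  exact h f hf

/-- complex Lipschitz functions -/
lemma le_kant_complex (μ ν : ProbabilityMeasure Circ) {f : Circ → ℂ} (hf : LipschitzWith 1 f) :
    ‖(∫ x, f x ∂(μ : Measure Circ)) - ∫ x, f x ∂(ν : Measure Circ)‖ ≤ kantorovichDist μ ν := by
  set z := (∫ x, f x ∂(μ : Measure Circ)) - ∫ x, f x ∂(ν : Measure Circ) with hz
  obtain ⟨c, hc, hcz⟩ : ∃ c : ℂ, ‖c‖ = 1 ∧ c * z = ‖z‖ := by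
    by_cases h0 : z = 0
    · exact ⟨1, by simp, by simp [h0]⟩
    · have : ‖z‖ ≠ 0 := by simpa using h0
      refine ⟨(starRingEnd ℂ) z / ‖z‖, by simp [this], ?_⟩
      have h' : (‖z‖ : ℂ) ≠ 0 := by exact_mod_cast this
      rw [div_mul_eq_mul_div, mul_comm, Complex.mul_conj, Complex.normSq_eq_norm_sq]
      push_cast
      field_simp
  have hL : LipschitzWith 1 (fun x => (c * f x).re) := by
    refine LipschitzWith.of_dist_le_mul fun x y => ?_
    rw [Real.dist_eq, ← Complex.sub_re, ← mul_sub]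
    refine (Complex.abs_re_le_norm _).trans ?_
    rw [norm_mul, hc, one_mul, ← dist_eq_norm]
    exact hf.dist_le_mul x y
  have key : ∀ μ : ProbabilityMeasure Circ, ∫ x, (c * f x).re ∂(μ : Measure Circ) =
      (c * ∫ x, f x ∂(μ : Measure Circ)).re := by
    intro μ
    rw [← integral_const_mul]
    exact integral_re (𝕜 := ℂ) (integrable_cont _ (continuous_const.mul hf.continuous))
  have := le_kant μ ν hL
  rw [key, key, ← Complex.sub_re, ← mul_sub, ← hz, hcz, Complex.ofReal_re, abs_norm] at this
  exact this


/-! ### Fourier coefficients -/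

lemma fourierCoeff_fourier (j k : ℤ) :
    fourierCoeff (fourier j : C(Circ, ℂ)) k = if j = k then 1 else 0 := by
  have h := orthonormal_iff_ite.1 (orthonormal_fourier (T := 2 * Real.pi)) k j
  rw [show (if j = k then (1 : ℂ) else 0) = if k = j then 1 else 0 by simp [eq_comm], ← h]
  unfold fourierLp
  rw [ContinuousMap.inner_toLp (AddCircle.haarAddCircle) (fourier k) (fourier j)]
  simp only [fourierCoeff, ← fourier_neg, smul_eq_mul]
  congr 1; ext x; first | done | ring

lemma coeff_add (f g : C(Circ, ℂ)) (k : ℤ) :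
    fourierCoeff (f + g : C(Circ, ℂ)) k = fourierCoeff f k + fourierCoeff g k := by
  rw [ContinuousMap.coe_add, fourierCoeff.add (integrable_cont _ f.continuous)
    (integrable_cont _ g.continuous)]
  rfl

lemma coeff_smul (c : ℂ) (f : C(Circ, ℂ)) (k : ℤ) :
    fourierCoeff (c • f : C(Circ, ℂ)) k = c * fourierCoeff f k := by
  rw [ContinuousMap.coe_smul, fourierCoeff.const_smul]
  rfl

lemma eq_sum_coeff {n : ℕ} {a : C(Circ, ℂ)} (ha : a ∈ fejerRieszSubmodule (n + 1)) :
    a = ∑ k ∈ Finset.Icc (-(n : ℤ)) n, fourierCoeff a k • (fourier k : C(Circ, ℂ)) := by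
  induction ha using Submodule.span_induction with
  | mem g hg =>
    obtain ⟨k, hk, rfl⟩ := hg
    simp_rw [fourierCoeff_fourier]
    have : k ∈ Finset.Icc (-(n : ℤ)) n := by
      rw [Finset.mem_Icc, ← abs_le]; push_cast at hk; linarith
    simp [ite_smul, Finset.sum_ite_eq, this]
  | zero =>
    have : ∀ k, fourierCoeff (0 : C(Circ, ℂ)) k = 0 := fun k => by
      have := coeff_smul 0 (0 : C(Circ, ℂ)) k
      simpa using this
    simp only [this, zero_smul, Finset.sum_const_zero]
  | add f g _ _ hf hg =>
    simp_rw [coeff_add, add_smul, Finset.sum_add_distrib]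
    rw [← hf, ← hg]
  | smul c f _ hf =>
    simp_rw [coeff_smul, mul_smul]
    rw [← Finset.smul_sum, ← hf]

lemma coeff_le {a : C(Circ, ℂ)} (ha : LipschitzWith 1 a) {k : ℤ} (hk : k ≠ 0) :
    ‖fourierCoeff a k‖ ≤ Real.pi := by
  have e : a = (a - a 0 • (fourier 0 : C(Circ, ℂ))) + a 0 • (fourier 0 : C(Circ, ℂ)) := by
    simp
  rw [e, coeff_add, coeff_smul, fourierCoeff_fourier, if_neg hk.symm, mul_zero, add_zero]
  unfold fourierCoeff
  have := norm_integral_le_of_norm_le_const (μ := (AddCircle.haarAddCircle : Measure Circ))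
    (f := fun t => (fourier (-k) : C(Circ, ℂ)) t • (a - a 0 • (fourier 0 : C(Circ, ℂ))) t)
    (C := Real.pi) (Eventually.of_forall fun x => ?_)
  · simpa using this
  · rw [norm_smul]
    have h1 : ‖(fourier (-k) : C(Circ, ℂ)) x‖ = 1 := Circle.norm_coe _
    rw [h1, one_mul]
    have : (a - a 0 • (fourier 0 : C(Circ, ℂ))) x = a x - a 0 := by simp
    rw [this, ← dist_eq_norm]
    refine (ha.dist_le_mul _ _).trans ?_
    simpa using norm_le_pi x

lemma int_sub_le_sum {n : ℕ} {a : C(Circ, ℂ)} (ha : a ∈ fejerRieszSubmodule (n + 1))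
    (hL : LipschitzWith 1 a) (μ ν : ProbabilityMeasure Circ) :
    ‖(∫ x, a x ∂(μ : Measure Circ)) - ∫ x, a x ∂(ν : Measure Circ)‖ ≤
      ∑ k ∈ Finset.Icc (-(n : ℤ)) n, Real.pi *
      ‖(∫ x, (fourier k : C(Circ, ℂ)) x ∂(μ : Measure Circ)) -
        ∫ x, (fourier k : C(Circ, ℂ)) x ∂(ν : Measure Circ)‖ := by
  have key : ∀ μ : ProbabilityMeasure Circ, ∫ x, a x ∂(μ : Measure Circ) =
      ∑ k ∈ Finset.Icc (-(n : ℤ)) n,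
        fourierCoeff a k * ∫ x, (fourier k : C(Circ, ℂ)) x ∂(μ : Measure Circ) := by
    intro μ
    simp_rw [← integral_const_mul]
    rw [← integral_finsetSum]
    · congr 1; ext x
      conv_lhs => rw [eq_sum_coeff ha]
      rw [ContinuousMap.sum_apply]
      rfl
    · intro i _
      exact integrable_cont _ (continuous_const.mul (fourier i).continuous)
  rw [key, key, ← Finset.sum_sub_distrib]
  refine (norm_sum_le _ _).trans (Finset.sum_le_sum fun k _ => ?_)
  rw [← mul_sub, norm_mul]
  by_cases hk : k = 0
  · subst hk
    simp
  · gcongr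
    exact coeff_le hL hk

/-! ### Kernels -/

lemma mono_sub {m n : ℕ} (h : m ≤ n) : fejerRieszSubmodule m ≤ fejerRieszSubmodule n := by
  refine Submodule.span_mono ?_
  rintro g ⟨k, hk, rfl⟩
  exact ⟨k, by have : (m : ℤ) ≤ n := by exact_mod_cast h
               linarith, rfl⟩

lemma fourier_mul_mem {n : ℕ} {a : C(Circ, ℂ)} (ha : a ∈ fejerRieszSubmodule n) (j : ℤ)
    (hj : |j| ≤ 1) : (fourier j : C(Circ, ℂ)) * a ∈ fejerRieszSubmodule (n + 1) := by
  induction ha using Submodule.span_induction with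
  | mem g hg =>
    obtain ⟨k, hk, rfl⟩ := hg
    refine Submodule.subset_span ⟨j + k, ?_, ?_⟩
    · have := abs_add_le j k
      push_cast; linarith
    · ext x
      exact fourier_add.symm
  | zero => simp
  | add f g _ _ hf hg => rw [mul_add]; exact add_mem hf hg
  | smul c f _ hf => rw [mul_smul_comm]; exact Submodule.smul_mem _ _ hf

/-- the complex base kernel `1 + cos` -/
noncomputable def ker0 : C(Circ, ℂ) :=
  1 + (1 / 2 : ℂ) • ((fourier 1 : C(Circ, ℂ)) + fourier (-1))

lemma ker0_pow_mem (n : ℕ) : ker0 ^ n ∈ fejerRieszSubmodule (n + 1) := by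
  induction n with
  | zero => simpa using one_mem_fejerRieszSubmodule 0
  | succ n ih =>
    rw [pow_succ', ker0, add_mul, one_mul, smul_mul_assoc, add_mul]
    refine add_mem (mono_sub (by omega) ih) (Submodule.smul_mem _ _ (add_mem ?_ ?_))
    · exact fourier_mul_mem ih 1 (by simp)
    · exact fourier_mul_mem ih (-1) (by simp)

/-- the real base kernel `1 + cos` -/
noncomputable def rker (x : Circ) : ℝ := 1 + ((fourier 1 : C(Circ, ℂ)) x).re

lemma rker_eq (x : Circ) : ker0 x = (rker x : ℂ) := by
  have h : ker0 x = 1 + (1 / 2 : ℂ) * ((fourier 1 : C(Circ, ℂ)) x +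
    (fourier (-1) : C(Circ, ℂ)) x) := rfl
  rw [h, fourier_neg, Complex.add_conj, rker]
  push_cast
  ring

lemma rker_cont : Continuous rker :=
  continuous_const.add (Complex.continuous_re.comp (fourier 1).continuous)

lemma rker_nonneg (x : Circ) : 0 ≤ rker x := by
  have h1 : ‖(fourier 1 : C(Circ, ℂ)) x‖ = 1 := Circle.norm_coe _
  have := Complex.abs_re_le_norm ((fourier 1 : C(Circ, ℂ)) x)
  rw [h1, abs_le] at this
  unfold rker
  linarith

lemma rker_zero : rker 0 = 2 := by
  unfold rker
  rw [fourier_eval_zero]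
  norm_num

lemma rker_lt (x : Circ) (hx : x ≠ 0) : rker x < rker 0 := by
  have h1 : ‖(fourier 1 : C(Circ, ℂ)) x‖ = 1 := Circle.norm_coe _
  have h2 := Complex.re_le_norm ((fourier 1 : C(Circ, ℂ)) x)
  rw [h1] at h2
  rw [rker_zero]
  unfold rker
  refine lt_of_le_of_ne (by linarith) fun h => hx ?_
  have hre : ((fourier 1 : C(Circ, ℂ)) x).re = 1 := by linarith
  have him : ((fourier 1 : C(Circ, ℂ)) x).im = 0 := by
    have := Complex.sq_norm ((fourier 1 : C(Circ, ℂ)) x)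
    rw [h1, Complex.normSq_apply, hre] at this
    nlinarith
  have : (fourier 1 : C(Circ, ℂ)) x = 1 := Complex.ext hre him
  rw [fourier_one] at this
  have h3 : AddCircle.toCircle x = AddCircle.toCircle (0 : Circ) := by
    rw [AddCircle.toCircle_zero]
    exact Subtype.ext this
  exact AddCircle.injective_toCircle (by positivity) h3

local notation "haar" => (AddCircle.haarAddCircle : Measure (AddCircle (2 * Real.pi)))

/-- normalising constants -/
noncomputable def rkInt (n : ℕ) : ℝ := ∫ x, rker x ^ n ∂haar

/-- approximation error -/
noncomputable def err (n : ℕ) : ℝ := (rkInt n)⁻¹ * ∫ x, rker x ^ n * ‖x‖ ∂haar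

lemma err_tendsto : Tendsto err atTop (𝓝 0) := by
  have := tendsto_setIntegral_pow_smul_of_unique_maximum_of_isCompact_of_continuousOn
    (μ := haar) (s := Set.univ) (c := rker) (x₀ := 0) (g := fun x : Circ => ‖x‖)
    isCompact_univ rker_cont.continuousOn (fun y _ hy => rker_lt y hy) (fun x _ => rker_nonneg x)
    (by rw [rker_zero]; norm_num) (by simp) continuous_norm.continuousOn
  simpa [err, rkInt] using! this

lemma rkInt_pos (n : ℕ) : 0 < rkInt n := by
  unfold rkInt
  refine Continuous.integral_pos_of_hasCompactSupport_nonneg_nonzero (x := 0)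
    (rker_cont.pow n) (HasCompactSupport.of_compactSpace _) (fun x => pow_nonneg (rker_nonneg x) n) ?_
  simp [rker_zero]

lemma conv_mem {n : ℕ} {p : C(Circ, ℂ)} (hp : p ∈ fejerRieszSubmodule n) {g : Circ → ℂ}
    (hg : Continuous g) :
    ∃ a ∈ fejerRieszSubmodule n, ∀ x, a x = ∫ t, p (x - t) * g t ∂haar := by
  induction hp using Submodule.span_induction with
  | mem q hq =>
    obtain ⟨k, hk, rfl⟩ := hq
    refine ⟨(∫ t, (fourier (-k) : C(Circ, ℂ)) t * g t ∂haar) • (fourier k : C(Circ, ℂ)),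
      Submodule.smul_mem _ _ (Submodule.subset_span ⟨k, hk, rfl⟩), fun x => ?_⟩
    rw [ContinuousMap.smul_apply, smul_eq_mul, mul_comm, ← integral_const_mul]
    congr 1; ext t
    have : (fourier k : C(Circ, ℂ)) (x - t) =
        (fourier k : C(Circ, ℂ)) x * (fourier (-k) : C(Circ, ℂ)) t := by
      simp only [fourier_apply, sub_eq_add_neg, smul_add, AddCircle.toCircle_add, neg_smul,
        smul_neg, Circle.coe_mul]
    rw [this, mul_assoc]
  | zero => exact ⟨0, zero_mem _, by simp⟩
  | add f h _ _ hf hh =>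
    obtain ⟨a, ha, ha'⟩ := hf
    obtain ⟨b, hb, hb'⟩ := hh
    refine ⟨a + b, add_mem ha hb, fun x => ?_⟩
    rw [ContinuousMap.add_apply, ha', hb', ← integral_add]
    · simp [add_mul]
    · exact integrable_cont _ (by fun_prop)
    · exact integrable_cont _ (by fun_prop)
  | smul c f _ hf =>
    obtain ⟨a, ha, ha'⟩ := hf
    refine ⟨c • a, Submodule.smul_mem _ _ ha, fun x => ?_⟩
    rw [ContinuousMap.smul_apply, ha', smul_eq_mul, ← integral_const_mul]
    simp [mul_assoc]

lemma exists_approx (n : ℕ) {f : Circ → ℝ} (hf : LipschitzWith 1 f) :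
    ∃ a ∈ fejerRieszSubmodule (n + 1), LipschitzWith 1 a ∧ ∀ x, ‖a x - (f x : ℂ)‖ ≤ err n := by
  have hI := rkInt_pos n
  have hfc := hf.continuous
  have hkc := rker_cont
  obtain ⟨b, hb, hb'⟩ := conv_mem (ker0_pow_mem n) (g := fun t => (f t : ℂ)) (by fun_prop)
  have hb2 : ∀ x, b x = ((∫ t, rker t ^ n * f (x - t) ∂haar : ℝ) : ℂ) := by
    intro x
    rw [hb']
    simp_rw [ContinuousMap.pow_apply, rker_eq]
    rw [← integral_sub_left_eq_self (fun t => (rker t : ℝ) ^ n * f (x - t)) _ x]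
    rw [← integral_complex_ofReal]
    congr 1; ext t; push_cast; simp
  have hint : ∀ x, Integrable (fun t => rker t ^ n * f (x - t)) haar := fun x =>
    integrable_cont _ (by fun_prop)
  have hintk : Integrable (fun t => rker t ^ n) haar := integrable_cont _ (by fun_prop)
  have hbd : ∀ (u v : Circ → ℝ) (D : ℝ) (w : Circ → ℝ), Continuous u → Continuous v →
      Continuous w → (∀ t, |u t - v t| ≤ w t) → (rkInt n)⁻¹ * ∫ t, rker t ^ n * w t ∂haar = D →
      |(rkInt n)⁻¹ * (∫ t, rker t ^ n * u t ∂haar) - (rkInt n)⁻¹ * ∫ t, rker t ^ n * v t ∂haar|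
        ≤ D := by
    intro u v D w hu hv hw h hD
    rw [← mul_sub, ← integral_sub (integrable_cont _ (by fun_prop))
      (integrable_cont _ (by fun_prop)), abs_mul, abs_of_pos (inv_pos.2 hI), ← hD]
    gcongr
    refine norm_integral_le_of_norm_le (f := fun t => rker t ^ n * u t - rker t ^ n * v t)
      (integrable_cont _ (by fun_prop)) (Eventually.of_forall fun t => ?_)
    rw [← mul_sub, norm_mul, Real.norm_eq_abs, Real.norm_eq_abs,
      abs_of_nonneg (pow_nonneg (rker_nonneg t) n)]
    exact mul_le_mul_of_nonneg_left (h t) (pow_nonneg (rker_nonneg t) n)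
  have hconst : ∀ D : ℝ, (rkInt n)⁻¹ * ∫ t, rker t ^ n * D ∂haar = D := by
    intro D
    rw [integral_mul_const, ← mul_assoc]
    change (rkInt n)⁻¹ * rkInt n * D = D
    rw [inv_mul_cancel₀ hI.ne', one_mul]
  have hval : ∀ x, ((((rkInt n)⁻¹ : ℝ) : ℂ) • b) x =
      (((rkInt n)⁻¹ * ∫ t, rker t ^ n * f (x - t) ∂haar : ℝ) : ℂ) := by
    intro x
    rw [ContinuousMap.smul_apply, hb2, smul_eq_mul, ← Complex.ofReal_mul]
  refine ⟨(((rkInt n)⁻¹ : ℝ) : ℂ) • b, Submodule.smul_mem _ _ hb, ?_, ?_⟩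
  · refine LipschitzWith.of_dist_le_mul fun x y => ?_
    rw [hval, hval, dist_eq_norm, ← Complex.ofReal_sub, Complex.norm_real]
    refine hbd _ _ _ (fun _ => (1 : NNReal) * dist x y) (by fun_prop) (by fun_prop)
      continuous_const (fun t => ?_) (hconst _)
    have := hf.dist_le_mul (x - t) (y - t)
    rwa [dist_sub_right, Real.dist_eq] at this
  · intro x
    rw [hval, ← Complex.ofReal_sub, Complex.norm_real, Real.norm_eq_abs]
    conv_lhs => rw [← hconst (f x)]
    refine hbd _ _ _ (fun t => ‖t‖) (by fun_prop) continuous_const continuous_norm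
      (fun t => ?_) rfl
    have := hf.dist_le_mul (x - t) x
    rw [Real.dist_eq, dist_eq_norm] at this
    simpa using this


/-! ### Restriction of measures to states -/

lemma int_add_cont (μ : ProbabilityMeasure Circ) (a b : C(Circ, ℂ)) :
    ∫ x, (a + b) x ∂(μ : Measure Circ) = ∫ x, a x ∂(μ : Measure Circ) +
      ∫ x, b x ∂(μ : Measure Circ) :=
  integral_add (integrable_cont _ a.continuous) (integrable_cont _ b.continuous)

lemma int_smul_cont (μ : ProbabilityMeasure Circ) (c : ℂ) (a : C(Circ, ℂ)) :
    ∫ x, (c • a) x ∂(μ : Measure Circ) = c * ∫ x, a x ∂(μ : Measure Circ) :=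
  integral_const_mul c _

lemma int_ofReal_cont (μ : ProbabilityMeasure Circ) (f : Circ → ℝ) :
    ∫ x, (f x : ℂ) ∂(μ : Measure Circ) = ((∫ x, f x ∂(μ : Measure Circ) : ℝ) : ℂ) :=
  integral_complex_ofReal

/-- Integration against a probability measure, restricted to `𝒫_{n+1}`. -/
noncomputable def restr (n : ℕ) (μ : ProbabilityMeasure Circ) : FejerRieszState n :=
  ⟨{ toFun := fun a => ∫ x, (a : C(Circ, ℂ)) x ∂(μ : Measure Circ)
     map_add' := fun a b => int_add_cont μ a b
     map_smul' := fun c a => int_smul_cont μ c a }, by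
    constructor
    · change ∫ x, (1 : C(Circ, ℂ)) x ∂(μ : Measure Circ) = 1
      simp
    · intro a ha
      change 0 ≤ ∫ x, (a : C(Circ, ℂ)) x ∂(μ : Measure Circ)
      have h : ∀ x, (a : C(Circ, ℂ)) x = (((a : C(Circ, ℂ)) x).re : ℂ) := fun x =>
        Complex.ext rfl (by simpa using (Complex.nonneg_iff.1 (ha x)).2.symm)
      rw [integral_congr_ae (Eventually.of_forall h), int_ofReal_cont]
      exact_mod_cast integral_nonneg fun x => (Complex.nonneg_iff.1 (ha x)).1⟩

lemma restr_apply (n : ℕ) (μ : ProbabilityMeasure Circ) (a : fejerRieszSubmodule (n + 1)) :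
    (restr n μ).1 a = ∫ x, (a : C(Circ, ℂ)) x ∂(μ : Measure Circ) := rfl

lemma star_mem {n : ℕ} {a : C(Circ, ℂ)} (ha : a ∈ fejerRieszSubmodule n) :
    star a ∈ fejerRieszSubmodule n := by
  induction ha using Submodule.span_induction with
  | mem g hg =>
    obtain ⟨k, hk, rfl⟩ := hg
    refine Submodule.subset_span ⟨-k, by simpa using hk, ?_⟩
    ext x
    exact fourier_neg.symm
  | zero => simp
  | add f g _ _ hf hg => rw [star_add]; exact add_mem hf hg
  | smul c f _ hf => rw [star_smul]; exact Submodule.smul_mem _ _ hf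

/-- complexification of real continuous functions -/
noncomputable def cplx : C(Circ, ℝ) →ₗ[ℝ] C(Circ, ℂ) where
  toFun f := ⟨fun x => (f x : ℂ), by fun_prop⟩
  map_add' f g := by ext x; simp
  map_smul' c f := by ext x; simp

lemma cplx_apply (f : C(Circ, ℝ)) (x : Circ) : cplx f x = (f x : ℂ) := rfl

lemma exists_re_im {n : ℕ} {a : C(Circ, ℂ)} (ha : a ∈ fejerRieszSubmodule n) :
    ∃ r s : C(Circ, ℝ), cplx r ∈ fejerRieszSubmodule n ∧ cplx s ∈ fejerRieszSubmodule n ∧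
      a = cplx r + Complex.I • cplx s := by
  refine ⟨⟨fun x => (a x).re, by fun_prop⟩, ⟨fun x => (a x).im, by fun_prop⟩, ?_, ?_, ?_⟩
  · convert Submodule.smul_mem _ (1 / 2 : ℂ) (add_mem ha (star_mem ha))
    ext x
    change ((a x).re : ℂ) = 1 / 2 * (a x + (starRingEnd ℂ) (a x))
    rw [Complex.add_conj]; push_cast; ring
  · convert Submodule.smul_mem _ (1 / (2 * Complex.I) : ℂ) (sub_mem ha (star_mem ha))
    ext x
    change ((a x).im : ℂ) = 1 / (2 * Complex.I) * (a x - (starRingEnd ℂ) (a x))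
    rw [Complex.sub_conj]; push_cast
    field_simp
  · ext x
    change a x = ((a x).re : ℂ) + Complex.I * ((a x).im : ℂ)
    exact (Complex.re_add_im (a x)).symm.trans (by ring)

lemma state_real {n : ℕ} (φ : FejerRieszState n) (r : C(Circ, ℝ))
    (hr : cplx r ∈ fejerRieszSubmodule (n + 1)) :
    φ.1 ⟨cplx r, hr⟩ = ((φ.1 ⟨cplx r, hr⟩).re : ℂ) := by
  have h := φ.2.2 (⟨cplx r, hr⟩ + (‖r‖ : ℂ) • fejerRieszOne n) (fun x => by
    change 0 ≤ (r x : ℂ) + (‖r‖ : ℂ) * 1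
    rw [mul_one]
    have h1 := (abs_le.1 (r.norm_coe_le_norm x)).1
    exact_mod_cast (by linarith : 0 ≤ r x + ‖r‖))
  rw [map_add, map_smul, φ.2.1] at h
  have := (Complex.nonneg_iff.1 h).2
  simp at this
  exact Complex.ext rfl (by simpa using this.symm)

lemma restr_surj (n : ℕ) (φ : FejerRieszState n) : ∃ μ, restr n μ = φ := by
  let P : Submodule ℝ C(Circ, ℝ) := ((fejerRieszSubmodule (n + 1)).restrictScalars ℝ).comap cplx
  have hP : ∀ r, r ∈ P ↔ cplx r ∈ fejerRieszSubmodule (n + 1) := fun r => Iff.rfl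
  let f : C(Circ, ℝ) →ₗ.[ℝ] ℝ :=
    { domain := P
      toFun :=
        { toFun := fun r => (φ.1 ⟨cplx r, r.2⟩).re
          map_add' := fun r s => by
            rw [← Complex.add_re, ← map_add]
            congr 2
            exact Subtype.ext (map_add cplx _ _)
          map_smul' := fun c r => by
            have : (⟨cplx (c • r : P), (c • r).2⟩ : fejerRieszSubmodule (n + 1)) =
                (c : ℂ) • ⟨cplx r, r.2⟩ := Subtype.ext (by ext x; simp [cplx_apply])
            rw [this, map_smul]
            simp } }
  let s : PointedCone ℝ C(Circ, ℝ) :=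
    { carrier := {r | ∀ x, 0 ≤ r x}
      add_mem' := fun {a b} ha hb x => add_nonneg (ha x) (hb x)
      zero_mem' := fun x => le_rfl
      smul_mem' := fun c a ha x => mul_nonneg c.2 (ha x) }
  have hs : ∀ r, r ∈ s ↔ ∀ x, 0 ≤ r x := fun r => Iff.rfl
  have h1P : (1 : C(Circ, ℝ)) ∈ P := by
    rw [hP]
    convert one_mem_fejerRieszSubmodule n
    ext x; simp [cplx_apply]
  obtain ⟨g, hg, hg0⟩ := riesz_extension s f (fun r hr => by
      refine (Complex.nonneg_iff.1 (φ.2.2 ⟨cplx r, r.2⟩ fun x => ?_)).1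
      exact Complex.zero_le_real.2 ((hs _).1 hr x))
    (fun y => ⟨⟨‖y‖ • 1, P.smul_mem _ h1P⟩, by
      rw [hs]
      intro x
      have h1 := (abs_le.1 (y.norm_coe_le_norm x)).1
      change 0 ≤ ‖y‖ * 1 + y x
      linarith⟩)
  let Λ : CompactlySupportedContinuousMap Circ ℝ →ₚ[ℝ] ℝ :=
    { toFun h := g h.toContinuousMap
      map_add' h h' := map_add g h.toContinuousMap h'.toContinuousMap
      map_smul' c h := map_smul g c h.toContinuousMap
      monotone' h h' hh := by
        have := hg0 (h'.toContinuousMap - h.toContinuousMap) (by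
          rw [hs]; intro x; exact sub_nonneg.2 (hh x))
        rw [map_sub] at this
        exact sub_nonneg.1 this }
  have hint : ∀ r : C(Circ, ℝ), ∫ x, r x ∂(RealRMK.rieszMeasure Λ) = g r := fun r =>
    RealRMK.integral_rieszMeasure Λ ⟨r, HasCompactSupport.of_compactSpace _⟩
  have hone : g 1 = 1 := by
    rw [hg ⟨1, h1P⟩]
    change (φ.1 ⟨cplx 1, h1P⟩).re = 1
    have : (⟨cplx 1, h1P⟩ : fejerRieszSubmodule (n + 1)) = fejerRieszOne n :=
      Subtype.ext (by ext x; simp [cplx_apply, fejerRieszOne])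
    rw [this, φ.2.1]; simp
  have hprob : IsProbabilityMeasure (RealRMK.rieszMeasure Λ) := by
    have h1 := hint 1
    rw [hone] at h1
    simp only [ContinuousMap.one_apply, integral_const, smul_eq_mul, mul_one] at h1
    constructor
    rw [Measure.real, ENNReal.toReal_eq_one_iff] at h1
    exact h1
  let μ : ProbabilityMeasure Circ := ⟨RealRMK.rieszMeasure Λ, hprob⟩
  refine ⟨μ, Subtype.ext (LinearMap.ext fun a => ?_)⟩
  refine (restr_apply n μ a).trans ?_
  have key : ∀ (r : C(Circ, ℝ)) (hr : cplx r ∈ fejerRieszSubmodule (n + 1)),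
      ∫ x, cplx r x ∂(μ : Measure Circ) = φ.1 ⟨cplx r, hr⟩ := by
    intro r hr
    change ∫ x, cplx r x ∂(RealRMK.rieszMeasure Λ) = φ.1 ⟨cplx r, hr⟩
    simp_rw [cplx_apply]
    rw [integral_complex_ofReal, hint, hg ⟨r, hr⟩, state_real φ r hr]
    rfl
  obtain ⟨r, t, hr, ht, e⟩ := exists_re_im a.2
  have ea : a = ⟨cplx r, hr⟩ + Complex.I • ⟨cplx t, ht⟩ := Subtype.ext e
  rw [e, int_add_cont, int_smul_cont]
  conv_rhs => rw [ea, map_add, map_smul]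
  rw [key r hr, key t ht]
  rfl

/-! ### The distances -/

lemma fr_bdd (n : ℕ) (φ ψ : FejerRieszState n) :
    BddAbove {r : ℝ | ∃ a : fejerRieszSubmodule (n + 1),
    trigLipSeminorm a ≤ 1 ∧ r = ‖φ.1 a - ψ.1 a‖} := by
  obtain ⟨μ, rfl⟩ := restr_surj n φ
  obtain ⟨ν, rfl⟩ := restr_surj n ψ
  refine ⟨2 * Real.pi, ?_⟩
  rintro r ⟨a, ha, rfl⟩
  exact lip_int_bdd μ ν ((lip_iff a).1 ha)

lemma le_fr {n : ℕ} (φ ψ : FejerRieszState n) (a : fejerRieszSubmodule (n + 1))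
    (ha : LipschitzWith 1 (a : C(Circ, ℂ))) : ‖φ.1 a - ψ.1 a‖ ≤ fejerRieszStateDist n φ ψ :=
  le_csSup (fr_bdd n φ ψ) ⟨a, (lip_iff a).2 ha, rfl⟩

lemma fr_le {n : ℕ} (φ ψ : FejerRieszState n) {C : ℝ} (h : ∀ a : fejerRieszSubmodule (n + 1),
    LipschitzWith 1 (a : C(Circ, ℂ)) → ‖φ.1 a - ψ.1 a‖ ≤ C) :
    fejerRieszStateDist n φ ψ ≤ C := by
  refine csSup_le ⟨_, 0, (lip_iff 0).2 (LipschitzWith.const' 0), rfl⟩ ?_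
  rintro r ⟨a, ha, rfl⟩
  exact h a ((lip_iff a).1 ha)

lemma fr_le_kant (n : ℕ) (μ ν : ProbabilityMeasure Circ) :
    fejerRieszStateDist n (restr n μ) (restr n ν) ≤ kantorovichDist μ ν :=
  fr_le _ _ fun _ ha => le_kant_complex μ ν ha

lemma kant_le_fr (n : ℕ) (μ ν : ProbabilityMeasure Circ) :
    kantorovichDist μ ν ≤ fejerRieszStateDist n (restr n μ) (restr n ν) + 2 * err n := by
  refine kant_le _ _ fun f hf => ?_
  obtain ⟨a, ha, hL, hclose⟩ := exists_approx n hf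
  have hfc : Continuous fun x => (f x : ℂ) := Complex.continuous_ofReal.comp hf.continuous
  have h1 := abs_int_sub_le μ a.continuous hfc hclose
  have h2 := abs_int_sub_le ν a.continuous hfc hclose
  have h3 := le_fr (restr n μ) (restr n ν) ⟨a, ha⟩ hL
  rw [restr_apply, restr_apply] at h3
  rw [int_ofReal_cont] at h1 h2
  rw [← Real.norm_eq_abs, ← Complex.norm_real, Complex.ofReal_sub]
  dsimp only at h3
  set A := ∫ x, a x ∂(μ : Measure Circ)
  set B := ∫ x, a x ∂(ν : Measure Circ)
  set F : ℂ := ((∫ x, f x ∂(μ : Measure Circ) : ℝ) : ℂ)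
  set G : ℂ := ((∫ x, f x ∂(ν : Measure Circ) : ℝ) : ℂ)
  calc ‖F - G‖ = ‖(A - B) - (A - F) + (B - G)‖ := by congr 1; ring
    _ ≤ ‖A - B‖ + ‖A - F‖ + ‖B - G‖ :=
      (norm_add_le _ _).trans (by gcongr; exact norm_sub_le _ _)
    _ ≤ _ := by linarith

lemma fr_tendsto (n : ℕ) (μ : ProbabilityMeasure Circ) :
    Tendsto (fun ν => fejerRieszStateDist n (restr n ν) (restr n μ)) (𝓝 μ) (𝓝 0) := by
  have h0 : ∀ ν, 0 ≤ fejerRieszStateDist n (restr n ν) (restr n μ) := fun ν =>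
    (norm_nonneg _).trans (le_fr _ _ 0 (LipschitzWith.const' 0))
  refine squeeze_zero h0 (fun ν => fr_le _ _ fun a ha => int_sub_le_sum a.2 ha ν μ) ?_
  have : (0 : ℝ) = ∑ k ∈ Finset.Icc (-(n : ℤ)) n, Real.pi *
      ‖(∫ x, (fourier k : C(Circ, ℂ)) x ∂(μ : Measure Circ)) -
        ∫ x, (fourier k : C(Circ, ℂ)) x ∂(μ : Measure Circ)‖ := by simp
  rw [this]
  refine tendsto_finsetSum _ fun k _ => Tendsto.const_mul _ (Tendsto.norm (Tendsto.sub ?_ ?_))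
  · exact (ProbabilityMeasure.tendsto_iff_forall_integral_rclike_tendsto ℂ).1 tendsto_id
      (BoundedContinuousFunction.mkOfCompact (fourier k))
  · exact tendsto_const_nhds

lemma kant_nonneg (μ ν : ProbabilityMeasure Circ) : 0 ≤ kantorovichDist μ ν :=
  (abs_nonneg _).trans (le_kant μ ν (LipschitzWith.const' 0))

lemma kant_tendsto (μ : ProbabilityMeasure Circ) :
    Tendsto (fun ν => kantorovichDist ν μ) (𝓝 μ) (𝓝 0) := by
  rw [Metric.tendsto_nhds]
  intro ε hε
  obtain ⟨n, hn⟩ := (((err_tendsto.const_mul 2).eventually_lt_const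
    (show 2 * (0 : ℝ) < ε / 2 by linarith))).exists
  filter_upwards [(fr_tendsto n μ).eventually_lt_const (half_pos hε)] with ν hν
  rw [Real.dist_eq, sub_zero, abs_of_nonneg (kant_nonneg _ _)]
  have := kant_le_fr n ν μ
  linarith

lemma fr_eq {n : ℕ} (φ ψ : FejerRieszState n) (h : fejerRieszStateDist n φ ψ = 0) : φ = ψ := by
  refine Subtype.ext (LinearMap.ext fun a => ?_)
  obtain ⟨c, hc, hL⟩ := exists_scale a
  have := le_fr φ ψ _ hL
  rw [h, map_smul, map_smul, ← smul_sub, norm_smul] at this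
  have h2 : ‖φ.1 a - ψ.1 a‖ ≤ 0 := by
    by_contra hlt
    push Not at hlt
    have := mul_pos (norm_pos_iff.2 hc) hlt
    linarith
  exact sub_eq_zero.1 (norm_le_zero_iff.1 h2)

lemma kant_eq (μ ν : ProbabilityMeasure Circ) (h : kantorovichDist μ ν = 0) : μ = ν := by
  have hR : ∀ n, restr n μ = restr n ν := fun n => fr_eq _ _ (le_antisymm
    ((fr_le_kant n μ ν).trans h.le)
    ((norm_nonneg _).trans (le_fr _ _ 0 (LipschitzWith.const' 0))))
  have hF : ∀ k : ℤ, ∫ x, (fourier k : C(Circ, ℂ)) x ∂(μ : Measure Circ) =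
      ∫ x, (fourier k : C(Circ, ℂ)) x ∂(ν : Measure Circ) := by
    intro k
    have hm : (fourier k : C(Circ, ℂ)) ∈ fejerRieszSubmodule (k.natAbs + 1) :=
      Submodule.subset_span ⟨k, by push_cast; simp, rfl⟩
    have := congrArg (fun φ => φ.1 ⟨_, hm⟩) (hR k.natAbs)
    exact this
  have hc : ∀ g : C(Circ, ℂ), ∫ x, g x ∂(μ : Measure Circ) = ∫ x, g x ∂(ν : Measure Circ) := by
    intro g
    have hg : g ∈ (Submodule.span ℂ (Set.range (fourier (T := 2 * Real.pi)))).topologicalClosure := by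
      rw [span_fourier_closure_eq_top]; trivial
    have hg' : g ∈ closure (Submodule.span ℂ (Set.range (fourier (T := 2 * Real.pi))) : Set _) := hg
    rw [Metric.mem_closure_iff] at hg'
    by_contra hne
    have hpos := norm_pos_iff.2 (sub_ne_zero.2 hne)
    obtain ⟨b, hb, hgb⟩ := hg' _ (half_pos hpos)
    have hbe : ∫ x, b x ∂(μ : Measure Circ) = ∫ x, b x ∂(ν : Measure Circ) := by
      clear hgb
      induction hb using Submodule.span_induction with
      | mem q hq => obtain ⟨k, rfl⟩ := hq; exact hF k
      | zero => simp
      | add p q _ _ hp hq => rw [int_add_cont, int_add_cont, hp, hq]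
      | smul c p _ hp => rw [int_smul_cont, int_smul_cont, hp]
    have hcl : ∀ x, ‖g x - b x‖ ≤ dist g b := fun x => by
      rw [← dist_eq_norm]; exact ContinuousMap.dist_apply_le_dist x
    have h1 := abs_int_sub_le μ g.continuous b.continuous hcl
    have h2 := abs_int_sub_le ν g.continuous b.continuous hcl
    rw [hbe] at h1
    have h3 := norm_sub_le ((∫ x, g x ∂(μ : Measure Circ)) - ∫ x, b x ∂(ν : Measure Circ))
      ((∫ x, g x ∂(ν : Measure Circ)) - ∫ x, b x ∂(ν : Measure Circ))
    rw [sub_sub_sub_cancel_right] at h3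
    linarith
  refine Subtype.ext (ext_of_forall_integral_eq_of_IsFiniteMeasure
    (μ := (μ : Measure Circ)) (ν := (ν : Measure Circ)) fun f => ?_)
  have := hc (cplx f.toContinuousMap)
  simp_rw [cplx_apply] at this
  rw [int_ofReal_cont, int_ofReal_cont] at this
  exact_mod_cast this

/-- metric on states -/
@[reducible] noncomputable def frMetric (n : ℕ) : MetricSpace (FejerRieszState n) where
  dist := fejerRieszStateDist n
  dist_self φ := le_antisymm (fr_le _ _ fun a _ => by simp)
    ((norm_nonneg _).trans (le_fr _ _ 0 (LipschitzWith.const' 0)))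
  dist_comm φ ψ := by
    unfold fejerRieszStateDist
    simp_rw [norm_sub_rev]
  dist_triangle φ ψ χ := fr_le _ _ fun a ha =>
    (norm_sub_le_norm_sub_add_norm_sub _ (ψ.1 a) _).trans (add_le_add (le_fr _ _ a ha) (le_fr _ _ a ha))
  eq_of_dist_eq_zero h := fr_eq _ _ h

/-- Kantorovich metric -/
@[reducible] noncomputable def kantMetric : MetricSpace (ProbabilityMeasure Circ) where
  dist := kantorovichDist
  dist_self μ := le_antisymm (kant_le _ _ fun a _ => by simp) (kant_nonneg _ _)
  dist_comm μ ν := le_antisymm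
    (kant_le _ _ fun a ha => by rw [abs_sub_comm]; exact le_kant _ _ ha)
    (kant_le _ _ fun a ha => by rw [abs_sub_comm]; exact le_kant _ _ ha)
  dist_triangle μ ν ρ := kant_le _ _ fun a ha =>
    (abs_sub_le _ _ _).trans (add_le_add (le_kant μ ν ha) (le_kant ν ρ ha))
  eq_of_dist_eq_zero h := kant_eq _ _ h

lemma compact_of_surj {X Y : Type*} [TopologicalSpace X] [CompactSpace X] [MetricSpace Y]
    (e : X → Y) (hs : Function.Surjective e)
    (h : ∀ x, Tendsto (fun y => dist (e y) (e x)) (𝓝 x) (𝓝 0)) : CompactSpace Y :=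
  hs.compactSpace (continuous_iff_continuousAt.2 fun x => tendsto_iff_dist_tendsto_zero.2 (h x))

lemma gh_le {X Y : Type*} [MetricSpace X] [Nonempty X] [CompactSpace X]
    [MetricSpace Y] [Nonempty Y] [CompactSpace Y] (R : Y → X) (hs : Function.Surjective R) (ε : ℝ)
    (h1 : ∀ y z, dist (R y) (R z) ≤ dist y z) (h2 : ∀ y z, dist y z ≤ dist (R y) (R z) + 2 * ε) :
    GromovHausdorff.ghDist X Y ≤ 3 * ε := by
  have := GromovHausdorff.ghDist_le_of_approx_subsets (s := (Set.univ : Set X))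
    (fun x => Function.surjInv hs x.1) (ε₁ := 0) (ε₂ := 2 * ε) (ε₃ := 2 * ε)
    (fun x => ⟨x, trivial, by simp⟩)
    (fun y => ⟨⟨R y, trivial⟩, by
      have := h2 y (Function.surjInv hs (R y))
      rw [Function.surjInv_eq hs] at this
      simpa using this⟩)
    (fun x y => by
      have a1 := h1 (Function.surjInv hs x.1) (Function.surjInv hs y.1)
      have a2 := h2 (Function.surjInv hs x.1) (Function.surjInv hs y.1)
      simp only [Function.surjInv_eq hs] at a1 a2
      rw [abs_le, Subtype.dist_eq]
      constructor <;> linarith [(dist_nonneg : 0 ≤ dist x.1 y.1)])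
  linarith

lemma gh_nonneg {X Y : Type*} [MetricSpace X] [Nonempty X] [CompactSpace X]
    [MetricSpace Y] [Nonempty Y] [CompactSpace Y] : 0 ≤ GromovHausdorff.ghDist X Y := dist_nonneg

lemma compactP : @CompactSpace (ProbabilityMeasure Circ)
    kantMetric.toUniformSpace.toTopologicalSpace :=
  @compact_of_surj _ _ _ _ kantMetric id Function.surjective_id kant_tendsto

lemma compactT (n : ℕ) : @CompactSpace (FejerRieszState n)
    (frMetric n).toUniformSpace.toTopologicalSpace :=
  @compact_of_surj _ _ _ _ (frMetric n) (restr n) (restr_surj n) (fr_tendsto n)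

lemma nonemptyP : Nonempty (ProbabilityMeasure Circ) := ⟨⟨haar, inferInstance⟩⟩

lemma nonemptyT (n : ℕ) : Nonempty (FejerRieszState n) := nonemptyP.map (restr n)

end FRGH

/-- Proposition 3.9: each state space `(S(𝒫_n), d_n)` (for `n ≥ 1`) is a nonempty compact
metric space, and it converges in Gromov–Hausdorff distance to the space of Borel
probability measures on the circle with the Kantorovich distance as `n → ∞`. -/
theorem fejerRieszStates_GH_converge :
    ∃ (instT : ∀ n : ℕ, MetricSpace (FejerRieszState n))
      (instP : MetricSpace (ProbabilityMeasure (AddCircle (2 * Real.pi))))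
      (hneT : ∀ n : ℕ, Nonempty (FejerRieszState n))
      (hneP : Nonempty (ProbabilityMeasure (AddCircle (2 * Real.pi))))
      (hcT : ∀ n : ℕ, @CompactSpace (FejerRieszState n)
        (instT n).toUniformSpace.toTopologicalSpace)
      (hcP : @CompactSpace (ProbabilityMeasure (AddCircle (2 * Real.pi)))
        instP.toUniformSpace.toTopologicalSpace),
      (∀ (n : ℕ) (φ ψ : FejerRieszState n),
        @dist _ (instT n).toDist φ ψ = fejerRieszStateDist n φ ψ) ∧
      (∀ μ ν : ProbabilityMeasure (AddCircle (2 * Real.pi)),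
        @dist _ instP.toDist μ ν = kantorovichDist μ ν) ∧
      Tendsto (fun n : ℕ =>
          @GromovHausdorff.ghDist (FejerRieszState n)
            (ProbabilityMeasure (AddCircle (2 * Real.pi)))
            (instT n) (hneT n) (hcT n) instP hneP hcP)
        atTop (nhds 0) := by
  refine ⟨FRGH.frMetric, FRGH.kantMetric, FRGH.nonemptyT, FRGH.nonemptyP, FRGH.compactT,
    FRGH.compactP, fun _ _ _ => rfl, fun _ _ => rfl, ?_⟩
  have h3 : Tendsto (fun n => 3 * FRGH.err n) atTop (nhds 0) := by
    simpa using FRGH.err_tendsto.const_mul 3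
  refine squeeze_zero (fun n => ?_) (fun n => ?_) h3
  · exact @FRGH.gh_nonneg _ _ (FRGH.frMetric n) (FRGH.nonemptyT n) (FRGH.compactT n)
      FRGH.kantMetric FRGH.nonemptyP FRGH.compactP
  · exact @FRGH.gh_le _ _ (FRGH.frMetric n) (FRGH.nonemptyT n) (FRGH.compactT n)
      FRGH.kantMetric FRGH.nonemptyP FRGH.compactP (FRGH.restr n) (FRGH.restr_surj n) (FRGH.err n)
      (FRGH.fr_le_kant n) (FRGH.kant_le_fr n)
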